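/- There exists an odd unimodular lattice L in dimension 43 having minimum norm 4 with σ(L) = 19. -/

import Mathlib

open scoped RealInnerProductSpace

noncomputable section

/-- The norm `(x, x)` of a vector `x ∈ ℝⁿ` (squared Euclidean length). -/
def normOf {n : ℕ} (x : EuclideanSpace ℝ (Fin n)) : ℝ := ⟪x, x⟫

/-- The dual `L* = {x ∈ ℝⁿ : (x,y) ∈ ℤ for all y ∈ L}` of a set of vectors. -/
def dualSet {n : ℕ} (L : Set (EuclideanSpace ℝ (Fin n))) : Set (EuclideanSpace ℝ (Fin n)) :=
  {x | ∀ y ∈ L, ∃ m : ℤ, ⟪x, y⟫ = (m : ℝ)}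

/-- `L` is a unimodular lattice: `L = L*`. -/
def IsUnimodularLattice {n : ℕ} (L : Set (EuclideanSpace ℝ (Fin n))) : Prop :=
  L = dualSet L

/-- `L` is odd: some vector of `L` has odd (integral) norm. -/
def IsOddLattice {n : ℕ} (L : Set (EuclideanSpace ℝ (Fin n))) : Prop :=
  ∃ x ∈ L, ∃ m : ℤ, Odd m ∧ normOf x = (m : ℝ)

/-- The even sublattice `L₀ = {x ∈ L : (x,x) even}`. -/
def evenSublattice {n : ℕ} (L : Set (EuclideanSpace ℝ (Fin n))) :
    Set (EuclideanSpace ℝ (Fin n)) :=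
  {x | x ∈ L ∧ ∃ m : ℤ, normOf x = 2 * (m : ℝ)}

/-- The shadow `S(L) = L₀* \ L`. -/
def shadow {n : ℕ} (L : Set (EuclideanSpace ℝ (Fin n))) : Set (EuclideanSpace ℝ (Fin n)) :=
  dualSet (evenSublattice L) \ L

/-- `L` has minimum norm `r`: `r` is the least norm among nonzero vectors of `L`. -/
def HasMinNorm {n : ℕ} (L : Set (EuclideanSpace ℝ (Fin n))) (r : ℝ) : Prop :=
  IsLeast {s : ℝ | ∃ x ∈ L, x ≠ 0 ∧ normOf x = s} r

/-- The shadow `S(L)` has minimum norm `r`. -/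
def HasShadowMinNorm {n : ℕ} (L : Set (EuclideanSpace ℝ (Fin n))) (r : ℝ) : Prop :=
  IsLeast {s : ℝ | ∃ x ∈ shadow L, normOf x = s} r

/-- `σ(L) = r`, i.e. `4 · min(S(L)) = r`. -/
def HasSigma {n : ℕ} (L : Set (EuclideanSpace ℝ (Fin n))) (r : ℝ) : Prop :=
  ∃ s : ℝ, HasShadowMinNorm L s ∧ r = 4 * s

/-- The number of vectors of norm `r` in `L`; when `L` has minimum norm `r`,
this is the kissing number of `L`. -/
def numVecsOfNorm {n : ℕ} (L : Set (EuclideanSpace ℝ (Fin n))) (r : ℝ) : ℕ :=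
  Set.ncard {x ∈ L | normOf x = r}

/-!
The lattice is obtained by Construction A, `L = {z / 2 : z mod 4 ∈ C}`, from a self-dual code `C`
over `ℤ/4ℤ`. Its residue code `C mod 2` is a doubly-even binary `[43, 10]` code with weights in
`{16, 20, 24, 28}` and dual distance `4`, and the words of `C` that vanish modulo `2` are twice the
words of the dual of the residue code. A nonzero vector `z / 2` of `L` has either at least `16` odd
coordinates `z j`, or at least `4` coordinates `z j ≡ 2 mod 4`, or a coordinate with `4 ∣ z j ≠ 0`;
in each case its norm is at least `4`.

The shadow consists of the halves of the characteristic vectors of `L` that lie outside `L`, so the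
norms of its vectors agree modulo `2`. It contains a vector of norm `19 / 4`. If `t / 2` lies in the
shadow, then `t mod 2` is the complement of a word of the residue code, so `t` has at least
`43 - 28 = 15` odd coordinates and `t / 2` has norm at least `15 / 4 > 19 / 4 - 2`. Hence `19 / 4`
is the minimum.
-/

open Matrix

section Lattice

variable {n : ℕ} {L : Set (EuclideanSpace ℝ (Fin n))} {v w x y : EuclideanSpace ℝ (Fin n)}

theorem normOf_add (x y : EuclideanSpace ℝ (Fin n)) :
    normOf (x + y) = normOf x + 2 * ⟪x, y⟫ + normOf y :=
  real_inner_add_add_self x y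

theorem normOf_sub (x y : EuclideanSpace ℝ (Fin n)) :
    normOf (x - y) = normOf x - 2 * ⟪x, y⟫ + normOf y :=
  real_inner_sub_sub_self x y

/-- The dual of a set of vectors, bundled as a subgroup of `ℝⁿ`; it makes the closure properties
of unimodular lattices, which are equal to their dual, available. -/
def dualAddSubgroup (L : Set (EuclideanSpace ℝ (Fin n))) :
    AddSubgroup (EuclideanSpace ℝ (Fin n)) where
  carrier := dualSet L
  zero_mem' y _ := ⟨0, by simp⟩
  add_mem' {x₁ x₂} hx₁ hx₂ y hy := by
    obtain ⟨⟨a, ha⟩, ⟨b, hb⟩⟩ := hx₁ y hy, hx₂ y hy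
    exact ⟨a + b, by rw [inner_add_left, ha, hb, Int.cast_add]⟩
  neg_mem' {x} hx y hy := by
    obtain ⟨a, ha⟩ := hx y hy
    exact ⟨-a, by rw [inner_neg_left, ha, Int.cast_neg]⟩

namespace IsUnimodularLattice

theorem coe_dualAddSubgroup (hL : IsUnimodularLattice L) : (dualAddSubgroup L : Set _) = L :=
  hL.symm

theorem add_mem (hL : IsUnimodularLattice L) (hx : x ∈ L) (hy : y ∈ L) : x + y ∈ L := by
  rw [← hL.coe_dualAddSubgroup] at *
  exact AddSubgroup.add_mem _ hx hy

theorem neg_mem (hL : IsUnimodularLattice L) (hx : x ∈ L) : -x ∈ L := by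
  rw [← hL.coe_dualAddSubgroup] at *
  exact AddSubgroup.neg_mem _ hx

theorem sub_mem (hL : IsUnimodularLattice L) (hx : x ∈ L) (hy : y ∈ L) : x - y ∈ L :=
  sub_eq_add_neg x y ▸ hL.add_mem hx (hL.neg_mem hy)

theorem exists_inner_eq (hL : IsUnimodularLattice L) (hx : x ∈ L) (hy : y ∈ L) :
    ∃ m : ℤ, ⟪x, y⟫ = m := by
  rw [hL] at hx
  exact hx y hy

theorem exists_normOf_eq (hL : IsUnimodularLattice L) (hx : x ∈ L) : ∃ m : ℤ, normOf x = m :=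
  hL.exists_inner_eq hx hx

end IsUnimodularLattice

/-- `v` is a characteristic vector of `L`: `(v, y) ≡ (y, y) mod 2` for all `y ∈ L`. -/
def IsCharacteristic (L : Set (EuclideanSpace ℝ (Fin n))) (v : EuclideanSpace ℝ (Fin n)) : Prop :=
  ∀ y ∈ L, ∃ m : ℤ, ⟪v, y⟫ = normOf y + 2 * m

-- `y ↦ (y, y)` is additive modulo `2` on `L`, so a generating set suffices.
theorem isCharacteristic_of_subset_closure {S : Set (EuclideanSpace ℝ (Fin n))}
    (hL : IsUnimodularLattice L) (hSL : S ⊆ L) (hLS : L ⊆ AddSubgroup.closure S)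
    (hS : IsCharacteristic S v) : IsCharacteristic L v := by
  suffices h : ∀ y ∈ AddSubgroup.closure S, y ∈ L ∧ ∃ m : ℤ, ⟪v, y⟫ = normOf y + 2 * m from
    fun y hy => (h y (hLS hy)).2
  intro y hy
  induction hy using AddSubgroup.closure_induction with
  | mem y hy => exact ⟨hSL hy, hS y hy⟩
  | zero => exact ⟨hL.coe_dualAddSubgroup ▸ (dualAddSubgroup L).zero_mem, 0, by simp [normOf]⟩
  | add x y _ _ hx hy =>
    obtain ⟨⟨hx, a, ha⟩, ⟨hy, b, hb⟩⟩ := hx, hy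
    obtain ⟨c, hc⟩ := hL.exists_inner_eq hx hy
    refine ⟨hL.add_mem hx hy, a + b - c, ?_⟩
    rw [inner_add_right, ha, hb, normOf_add, hc]
    push_cast
    ring
  | neg x _ hx =>
    obtain ⟨hx, a, ha⟩ := hx
    obtain ⟨c, hc⟩ := hL.exists_normOf_eq hx
    refine ⟨hL.neg_mem hx, -a - c, ?_⟩
    rw [inner_neg_right, ha, hc, show normOf (-x) = normOf x from inner_neg_neg x x, hc]
    push_cast
    ring

theorem mem_evenSublattice_of_even {k : ℤ} (hx : x ∈ L) (hk : normOf x = k) (hk_even : Even k) :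
    x ∈ evenSublattice L := by
  obtain ⟨m, rfl⟩ := hk_even.two_dvd
  exact ⟨hx, m, by rw [hk]; push_cast; rfl⟩

theorem exists_odd_inner_two_smul_of_mem_shadow (hL : IsUnimodularLattice L) (hx : x ∈ shadow L) :
    ∃ z ∈ L, (∃ k : ℤ, Odd k ∧ normOf z = k) ∧ ∃ l : ℤ, Odd l ∧ ⟪(2 : ℝ) • x, z⟫ = l := by
  obtain ⟨hx_dual, hxL⟩ := hx
  obtain ⟨z, hz, hxz⟩ : ∃ z ∈ L, ¬∃ m : ℤ, ⟪x, z⟫ = m := by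
    by_contra! hint
    exact hxL (hL ▸ hint)
  obtain ⟨k, hk⟩ := hL.exists_normOf_eq hz
  have hk_odd : Odd k := Int.not_even_iff_odd.1 fun hk_even =>
    hxz (hx_dual z (mem_evenSublattice_of_even hz hk hk_even))
  obtain ⟨l, hl⟩ : ∃ l : ℤ, ⟪x, z + z⟫ = l := by
    refine hx_dual _ (mem_evenSublattice_of_even (k := 4 * k) (hL.add_mem hz hz) ?_ ?_)
    · rw [normOf_add, ← normOf, hk]
      push_cast
      ring
    · exact (by decide : Even (4 : ℤ)).mul_right k
  rw [inner_add_right] at hl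
  refine ⟨z, hz, ⟨k, hk_odd, hk⟩, l, Int.not_even_iff_odd.1 fun hl_even => ?_, ?_⟩
  · obtain ⟨j, rfl⟩ := hl_even
    push_cast at hl
    exact hxz ⟨j, by linarith⟩
  · rw [real_inner_smul_left]
    linarith

theorem isOddLattice_of_mem_shadow (hL : IsUnimodularLattice L) (hx : x ∈ shadow L) :
    IsOddLattice L := by
  obtain ⟨z, hz, hz_odd, -⟩ := exists_odd_inner_two_smul_of_mem_shadow hL hx
  exact ⟨z, hz, hz_odd⟩

theorem isCharacteristic_two_smul_of_mem_shadow (hL : IsUnimodularLattice L)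
    (hx : x ∈ shadow L) : IsCharacteristic L ((2 : ℝ) • x) := by
  obtain ⟨z, hz, ⟨k, hk_odd, hk⟩, l, hl_odd, hl⟩ := exists_odd_inner_two_smul_of_mem_shadow hL hx
  rw [real_inner_smul_left] at hl
  intro y hy
  obtain ⟨c, hc⟩ := hL.exists_normOf_eq hy
  rw [real_inner_smul_left, hc]
  rcases Int.even_or_odd c with hc_even | hc_odd
  · obtain ⟨j, hj⟩ := hx.1 y (mem_evenSublattice_of_even hy hc hc_even)
    obtain ⟨r, rfl⟩ := hc_even
    refine ⟨j - r, ?_⟩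
    rw [hj]
    push_cast
    ring
  · obtain ⟨b, hb⟩ := hL.exists_inner_eq hy hz
    have hyz : y - z ∈ evenSublattice L := by
      refine mem_evenSublattice_of_even (k := c - 2 * b + k) (hL.sub_mem hy hz) ?_ ?_
      · rw [normOf_sub, hc, hb, hk]
        push_cast
        rfl
      · exact (hc_odd.sub_even (even_two_mul b)).add_odd hk_odd
    obtain ⟨j, hj⟩ := hx.1 _ hyz
    obtain ⟨s, hs⟩ := hl_odd.sub_odd hc_odd
    have hs' : (l : ℝ) - c = s + s := by exact_mod_cast hs
    rw [inner_sub_right] at hj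
    refine ⟨j + s, ?_⟩
    push_cast
    linarith

theorem mem_shadow_iff (hL : IsUnimodularLattice L) :
    x ∈ shadow L ↔ x ∉ L ∧ IsCharacteristic L ((2 : ℝ) • x) := by
  refine ⟨fun hx => ⟨hx.2, isCharacteristic_two_smul_of_mem_shadow hL hx⟩, ?_⟩
  refine fun ⟨hxL, hx⟩ => ⟨?_, hxL⟩
  rintro y ⟨hy, k, hk⟩
  obtain ⟨m, hm⟩ := hx y hy
  rw [real_inner_smul_left, hk] at hm
  refine ⟨k + m, ?_⟩
  push_cast
  linarith

theorem sub_mem_of_mem_shadow (hL : IsUnimodularLattice L) (hx : x ∈ shadow L)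
    (hw : w ∈ shadow L) : x - w ∈ L := by
  rw [hL]
  intro y hy
  obtain ⟨a, ha⟩ := isCharacteristic_two_smul_of_mem_shadow hL hx y hy
  obtain ⟨b, hb⟩ := isCharacteristic_two_smul_of_mem_shadow hL hw y hy
  rw [real_inner_smul_left] at ha hb
  refine ⟨a - b, ?_⟩
  rw [inner_sub_left]
  push_cast
  linarith

theorem exists_normOf_eq_add_two_mul_of_mem_shadow (hL : IsUnimodularLattice L)
    (hw : w ∈ shadow L) (hx : x ∈ shadow L) : ∃ m : ℤ, normOf x = normOf w + 2 * m := by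
  have hxw := sub_mem_of_mem_shadow hL hx hw
  obtain ⟨k, hk⟩ := hL.exists_normOf_eq hxw
  obtain ⟨m, hm⟩ := isCharacteristic_two_smul_of_mem_shadow hL hw _ hxw
  rw [real_inner_smul_left] at hm
  refine ⟨k + m, ?_⟩
  have hx_norm := normOf_add w (x - w)
  rw [add_sub_cancel, hm, hk] at hx_norm
  push_cast
  linarith

theorem hasShadowMinNorm_of_forall_sub_two_lt (hL : IsUnimodularLattice L) (hw : w ∈ shadow L)
    (hlt : ∀ x ∈ shadow L, normOf w - 2 < normOf x) : HasShadowMinNorm L (normOf w) := by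
  refine ⟨⟨w, hw, rfl⟩, ?_⟩
  rintro _ ⟨x, hx, rfl⟩
  obtain ⟨m, hm⟩ := exists_normOf_eq_add_two_mul_of_mem_shadow hL hw hx
  have hm_gt : (-1 : ℝ) < m := by linarith [hlt x hx]
  have hm_nonneg : (0 : ℝ) ≤ m := by
    have : (-1 : ℤ) < m := by exact_mod_cast hm_gt
    exact_mod_cast Int.add_one_le_iff.2 this
  linarith

end Lattice

section ConstructionA

variable {n : ℕ} {C : Set (Fin n → ZMod 4)} {z w : Fin n → ℤ}

/-- The embedding `z ↦ z / 2` of the integer vectors into `ℝⁿ`. -/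
def halfVec : (Fin n → ℤ) →+ EuclideanSpace ℝ (Fin n) where
  toFun z := WithLp.toLp 2 fun j => (z j : ℝ) / 2
  map_zero' := by ext; simp
  map_add' z w := by ext; simp [add_div]

@[simp] theorem halfVec_apply (z : Fin n → ℤ) (j : Fin n) : halfVec z j = (z j : ℝ) / 2 := rfl

theorem inner_halfVec (z w : Fin n → ℤ) : ⟪halfVec z, halfVec w⟫ = ((z ⬝ᵥ w : ℤ) : ℝ) / 4 := by
  simp only [PiLp.inner_apply, halfVec_apply, Real.inner_apply, dotProduct, Int.cast_sum,
    Int.cast_mul, Finset.sum_div]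
  exact Finset.sum_congr rfl fun j _ => by ring

theorem normOf_halfVec (z : Fin n → ℤ) : normOf (halfVec z) = ((z ⬝ᵥ z : ℤ) : ℝ) / 4 :=
  inner_halfVec z z

theorem inner_halfVec_single (x : EuclideanSpace ℝ (Fin n)) (j : Fin n) :
    ⟪x, halfVec (Pi.single j 4)⟫ = 2 * x j := by
  have : halfVec (Pi.single j 4) = EuclideanSpace.single j (2 : ℝ) := by
    ext i
    rcases eq_or_ne i j with rfl | hij
    · norm_num
    · simp [hij]
  rw [this, EuclideanSpace.inner_single_right]
  simp

theorem exists_intCast_eq_div_four_iff {k : ℤ} : (∃ m : ℤ, (k : ℝ) / 4 = m) ↔ (k : ZMod 4) = 0 := by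
  rw [ZMod.intCast_zmod_eq_zero_iff_dvd]
  refine exists_congr fun m => ?_
  rw [div_eq_iff four_ne_zero, mul_comm]
  norm_cast

theorem intCast_dotProduct {ι R : Type*} [Fintype ι] [CommRing R] (z w : ι → ℤ) :
    ((z ⬝ᵥ w : ℤ) : R) = (Int.cast ∘ z) ⬝ᵥ (Int.cast ∘ w) :=
  (Int.castRingHom R).map_dotProduct z w

theorem exists_intCast_comp_eq {ι : Type*} {m : ℕ} (c : ι → ZMod m) :
    ∃ z : ι → ℤ, Int.cast ∘ z = c :=
  ZMod.intCast_surjective.comp_left c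

/-- Construction A for codes over `ℤ/4ℤ`: the vectors `z / 2`, where `z` is an integer vector
whose reduction modulo `4` is a codeword. -/
def constructionA (C : Set (Fin n → ZMod 4)) : Set (EuclideanSpace ℝ (Fin n)) :=
  {x | ∃ z : Fin n → ℤ, Int.cast ∘ z ∈ C ∧ halfVec z = x}

theorem halfVec_mem_constructionA (hz : Int.cast ∘ z ∈ C) : halfVec z ∈ constructionA C :=
  ⟨z, hz, rfl⟩

theorem halfVec_single_mem_constructionA (hC : 0 ∈ C) (j : Fin n) :
    halfVec (Pi.single j 4) ∈ constructionA C := by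
  refine halfVec_mem_constructionA ?_
  convert hC
  ext i
  rcases eq_or_ne i j with rfl | hij
  · simpa using ZMod.natCast_self 4
  · simp [hij]

/-- A code is self-dual if it consists of the vectors orthogonal to all its codewords. -/
def IsSelfDualCode {ι R : Type*} [Fintype ι] [CommSemiring R] (C : Set (ι → R)) : Prop :=
  C = {c | ∀ d ∈ C, c ⬝ᵥ d = 0}

theorem IsSelfDualCode.zero_mem {ι R : Type*} [Fintype ι] [CommSemiring R] {C : Set (ι → R)}
    (hC : IsSelfDualCode C) : 0 ∈ C := by
  rw [hC]
  exact fun d _ => zero_dotProduct d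

theorem IsSelfDualCode.isUnimodularLattice_constructionA (hC : IsSelfDualCode C) :
    IsUnimodularLattice (constructionA C) := by
  refine Set.Subset.antisymm ?_ fun x hx => ?_
  · rintro _ ⟨z, hz, rfl⟩ _ ⟨w, hw, rfl⟩
    rw [inner_halfVec, exists_intCast_eq_div_four_iff, intCast_dotProduct]
    rw [hC] at hz
    exact hz _ hw
  · choose z hz using fun j => hx _ (halfVec_single_mem_constructionA hC.zero_mem j)
    have hxz : halfVec z = x := by
      ext j
      rw [halfVec_apply, ← hz, inner_halfVec_single, mul_div_cancel_left₀ _ two_ne_zero]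
    refine ⟨z, ?_, hxz⟩
    rw [hC]
    intro d hd
    obtain ⟨w, rfl⟩ := exists_intCast_comp_eq d
    rw [← intCast_dotProduct, ← exists_intCast_eq_div_four_iff, ← inner_halfVec, hxz]
    exact hx _ (halfVec_mem_constructionA hd)

theorem halfVec_notMem_constructionA (hC : IsSelfDualCode C) (hz : ¬4 ∣ z ⬝ᵥ z) :
    halfVec z ∉ constructionA C := by
  intro hmem
  have hint := hC.isUnimodularLattice_constructionA.exists_normOf_eq hmem
  rw [normOf_halfVec, exists_intCast_eq_div_four_iff] at hint
  exact hz ((ZMod.intCast_zmod_eq_zero_iff_dvd _ 4).1 hint)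

theorem mul_hammingNorm_le_dotProduct_self {ι R : Type*} [Fintype ι] [Zero R] [DecidableEq R]
    {k : ℤ} {z : ι → ℤ} {c : ι → R} (h : ∀ j, c j ≠ 0 → k ≤ z j ^ 2) : k * hammingNorm c ≤ z ⬝ᵥ z :=
  calc k * hammingNorm c = ∑ j with c j ≠ 0, k := by
        rw [Finset.sum_const, nsmul_eq_mul, mul_comm]
        rfl
    _ ≤ ∑ j with c j ≠ 0, z j ^ 2 := Finset.sum_le_sum fun j hj => h j (by simpa using hj)
    _ ≤ ∑ j, z j ^ 2 :=
        Finset.sum_le_sum_of_subset_of_nonneg (Finset.filter_subset _ _) fun _ _ _ => sq_nonneg _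
    _ = z ⬝ᵥ z := Finset.sum_congr rfl fun j _ => sq (z j)

/-- Reduction of `ℤ/4ℤ` modulo `2`. Applied to the codewords of a code over `ℤ/4ℤ` it gives the
residue code. -/
def reduction : ZMod 4 →+* ZMod 2 :=
  ZMod.castHom (by norm_num) (ZMod 2)

theorem reduction_intCast (k : ℤ) : reduction (k : ZMod 4) = k :=
  map_intCast _ k

theorem reduction_comp_intCast_comp {ι : Type*} (z : ι → ℤ) :
    reduction ∘ (Int.cast ∘ z) = (Int.cast ∘ z : ι → ZMod 2) :=
  funext fun j => reduction_intCast (z j)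

theorem sq_le_sq_of_dvd_of_ne_zero {d k : ℤ} (hdvd : d ∣ k) (hk : k ≠ 0) : d ^ 2 ≤ k ^ 2 :=
  Int.le_of_dvd (by positivity) (pow_dvd_pow_of_dvd hdvd 2)

theorem hammingNorm_intCast_comp_le_dotProduct_self {ι : Type*} [Fintype ι] (z : ι → ℤ) (m : ℕ) :
    (hammingNorm (Int.cast ∘ z : ι → ZMod m) : ℤ) ≤ z ⬝ᵥ z := by
  rw [← one_mul (hammingNorm _ : ℤ)]
  refine mul_hammingNorm_le_dotProduct_self fun j hj => ?_
  simpa using sq_le_sq_of_dvd_of_ne_zero (one_dvd (z j)) fun h0 => hj (by simp [h0])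

theorem sixteen_le_dotProduct_self (hz : z ≠ 0) (hzC : Int.cast ∘ z ∈ C)
    (hresidue : ∀ c ∈ C, reduction ∘ c ≠ 0 → 16 ≤ hammingNorm (reduction ∘ c))
    (htorsion : ∀ c ∈ C, c ≠ 0 → reduction ∘ c = 0 → 4 ≤ hammingNorm c) : 16 ≤ z ⬝ᵥ z := by
  have hred := reduction_comp_intCast_comp z
  by_cases hodd : (Int.cast ∘ z : Fin n → ZMod 2) = 0
  · by_cases hzero : (Int.cast ∘ z : Fin n → ZMod 4) = 0
    · have hdvd (j) : (4 : ℤ) ∣ z j := (ZMod.intCast_zmod_eq_zero_iff_dvd _ 4).1 (congr_fun hzero j)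
      have hweight : 0 < hammingNorm z := hammingNorm_pos_iff.2 hz
      have := mul_hammingNorm_le_dotProduct_self fun j hj => sq_le_sq_of_dvd_of_ne_zero (hdvd j) hj
      linarith [show (1 : ℤ) ≤ hammingNorm z by exact_mod_cast hweight]
    · have hdvd (j) : (2 : ℤ) ∣ z j := (ZMod.intCast_zmod_eq_zero_iff_dvd _ 2).1 (congr_fun hodd j)
      have hweight := htorsion _ hzC hzero (hred.trans hodd)
      have hle := mul_hammingNorm_le_dotProduct_self (c := (Int.cast ∘ z : Fin n → ZMod 4))
        fun j hj => sq_le_sq_of_dvd_of_ne_zero (hdvd j) fun h0 => hj (by simp [h0])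
      have hweight' : (4 : ℤ) ≤ hammingNorm (Int.cast ∘ z : Fin n → ZMod 4) := by
        exact_mod_cast hweight
      linarith only [hle, hweight']
  · have hweight := hresidue _ hzC (hred ▸ hodd)
    rw [hred] at hweight
    exact le_trans (by exact_mod_cast hweight) (hammingNorm_intCast_comp_le_dotProduct_self z 2)

theorem hasMinNorm_constructionA [NeZero n] (hC : 0 ∈ C)
    (hresidue : ∀ c ∈ C, reduction ∘ c ≠ 0 → 16 ≤ hammingNorm (reduction ∘ c))
    (htorsion : ∀ c ∈ C, c ≠ 0 → reduction ∘ c = 0 → 4 ≤ hammingNorm c) :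
    HasMinNorm (constructionA C) 4 := by
  constructor
  · have hnorm : normOf (halfVec (Pi.single (0 : Fin n) 4)) = 4 := by
      rw [normOf, inner_halfVec_single]
      norm_num
    refine ⟨_, halfVec_single_mem_constructionA hC 0, fun h0 => ?_, hnorm⟩
    norm_num [h0, normOf] at hnorm
  · rintro _ ⟨_, ⟨z, hzC, rfl⟩, hz, rfl⟩
    have hz0 : z ≠ 0 := by
      rintro rfl
      exact hz (map_zero halfVec)
    have : (16 : ℝ) ≤ (z ⬝ᵥ z : ℤ) := by
      exact_mod_cast sixteen_le_dotProduct_self hz0 hzC hresidue htorsion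
    rw [normOf_halfVec]
    linarith

end ConstructionA

section LiftedCode

theorem exists_eq_vecMul_of_forall_mulVec_eq_zero {K κ ι : Type*} [Field K] [Fintype κ]
    [Fintype ι] {M : Matrix κ ι K} {v : ι → K} (h : ∀ w, M *ᵥ w = 0 → v ⬝ᵥ w = 0) :
    ∃ a, v = a ᵥ* M := by
  classical
  have hspan : dotProductEquiv K ι v ∈
      Submodule.span K (Set.range fun i => dotProductEquiv K ι (M i)) := by
    refine mem_span_of_iInf_ker_le_ker fun w hw => ?_
    simp only [Submodule.mem_iInf, LinearMap.mem_ker] at hw ⊢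
    exact h w (funext hw)
  obtain ⟨a, ha⟩ := (Submodule.mem_span_range_iff_exists_fun K).1 hspan
  refine ⟨a, (dotProductEquiv K ι).injective ?_⟩
  rw [← ha, vecMul_eq_sum, map_sum]
  simp only [map_smul]

theorem two_mul_eq_zero_iff_reduction_eq_zero : ∀ {k : ZMod 4}, 2 * k = 0 ↔ reduction k = 0 := by
  decide

theorem exists_eq_two_mul_of_reduction_eq_zero :
    ∀ {k : ZMod 4}, reduction k = 0 → ∃ l, k = 2 * l := by
  decide

theorem reduction_surjective : Function.Surjective reduction := by
  decide

variable {κ ι : Type*} {R : Matrix κ ι (ZMod 4)} {c w : ι → ZMod 4}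

theorem exists_eq_two_smul_of_reduction_comp_eq_zero (hc : reduction ∘ c = 0) :
    ∃ w, c = (2 : ZMod 4) • w := by
  choose w hw using fun j => exists_eq_two_mul_of_reduction_eq_zero (congr_fun hc j)
  exact ⟨w, funext hw⟩

theorem reduction_comp_two_smul (w : ι → ZMod 4) : reduction ∘ ((2 : ZMod 4) • w) = 0 :=
  funext fun j => (map_mul reduction 2 (w j)).trans (zero_mul _)

variable [Fintype ι]

theorem mulVec_two_smul_eq_zero_iff :
    R *ᵥ ((2 : ZMod 4) • w) = 0 ↔ R.map reduction *ᵥ (reduction ∘ w) = 0 := by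
  rw [mulVec_smul, funext_iff, funext_iff]
  refine forall_congr' fun i => ?_
  rw [← reduction.map_mulVec]
  exact two_mul_eq_zero_iff_reduction_eq_zero

variable [Fintype κ]

/-- The code over `ℤ/4ℤ` generated by the rows of `R` and by twice the vectors orthogonal to them
modulo `2`, for a matrix `R` with mutually orthogonal isotropic rows. Its residue code is spanned
by the rows of `R` modulo `2`. -/
def liftedCode (R : Matrix κ ι (ZMod 4)) : Set (ι → ZMod 4) :=
  {c | R *ᵥ c = 0 ∧ ∃ a : κ → ZMod 2, reduction ∘ c = a ᵥ* R.map reduction}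

theorem two_smul_mem_liftedCode_iff :
    (2 : ZMod 4) • w ∈ liftedCode R ↔ R.map reduction *ᵥ (reduction ∘ w) = 0 := by
  rw [← mulVec_two_smul_eq_zero_iff]
  exact and_iff_left ⟨0, by rw [reduction_comp_two_smul, zero_vecMul]⟩

theorem mulVec_vecMul_eq_zero (hR : R * Rᵀ = 0) (a : κ → ZMod 4) : R *ᵥ (a ᵥ* R) = 0 := by
  rw [← mulVec_transpose, mulVec_mulVec, hR, zero_mulVec]

theorem vecMul_mem_liftedCode (hR : R * Rᵀ = 0) (a : κ → ZMod 4) : a ᵥ* R ∈ liftedCode R :=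
  ⟨mulVec_vecMul_eq_zero hR a, reduction ∘ a, funext fun j => reduction.map_vecMul R a j⟩

theorem row_mem_liftedCode (hR : R * Rᵀ = 0) (i : κ) : R.row i ∈ liftedCode R := by
  classical
  rw [← single_one_vecMul]
  exact vecMul_mem_liftedCode hR _

theorem exists_eq_vecMul_add_two_smul (hR : R * Rᵀ = 0) (hc : c ∈ liftedCode R) :
    ∃ a w, c = a ᵥ* R + (2 : ZMod 4) • w ∧ R *ᵥ ((2 : ZMod 4) • w) = 0 := by
  obtain ⟨hRc, a, ha⟩ := hc
  obtain ⟨a, rfl⟩ := reduction_surjective.comp_left a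
  obtain ⟨w, hw⟩ : ∃ w, c - a ᵥ* R = (2 : ZMod 4) • w := by
    refine exists_eq_two_smul_of_reduction_comp_eq_zero (funext fun j => ?_)
    rw [Function.comp_apply, Pi.sub_apply, map_sub, reduction.map_vecMul, Pi.zero_apply]
    exact sub_eq_zero_of_eq (congr_fun ha j)
  refine ⟨a, w, by rw [← hw, add_sub_cancel], ?_⟩
  rw [← hw, mulVec_sub, hRc, mulVec_vecMul_eq_zero hR, sub_zero]

theorem dotProduct_eq_zero_of_mem_liftedCode (hR : R * Rᵀ = 0) {d : ι → ZMod 4}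
    (hc : c ∈ liftedCode R) (hd : d ∈ liftedCode R) : c ⬝ᵥ d = 0 := by
  obtain ⟨a, v, rfl, hv⟩ := exists_eq_vecMul_add_two_smul hR hc
  obtain ⟨b, w, rfl, -⟩ := exists_eq_vecMul_add_two_smul hR hd
  have hfour : ((2 : ZMod 4) • v) ⬝ᵥ ((2 : ZMod 4) • w) = 0 := by
    rw [smul_dotProduct, dotProduct_smul, smul_smul, show (2 : ZMod 4) * 2 = 0 from rfl, zero_smul]
  rw [add_dotProduct, ← dotProduct_mulVec, hd.1, dotProduct_zero, zero_add, dotProduct_add, hfour,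
    add_zero, dotProduct_comm, ← dotProduct_mulVec, hv, dotProduct_zero]

theorem isSelfDualCode_liftedCode (hR : R * Rᵀ = 0) : IsSelfDualCode (liftedCode R) := by
  refine Set.Subset.antisymm (fun c hc d hd => dotProduct_eq_zero_of_mem_liftedCode hR hc hd) ?_
  refine fun c hc => ⟨funext fun i => ?_, ?_⟩
  · exact (dotProduct_comm _ _).trans (hc _ (row_mem_liftedCode hR i))
  · refine exists_eq_vecMul_of_forall_mulVec_eq_zero fun w hw => ?_
    obtain ⟨w, rfl⟩ := reduction_surjective.comp_left w
    have := hc _ (two_smul_mem_liftedCode_iff.2 hw)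
    rw [dotProduct_smul] at this
    rw [← reduction.map_dotProduct]
    exact two_mul_eq_zero_iff_reduction_eq_zero.1 this

theorem le_hammingNorm_of_mem_liftedCode {d : ℕ}
    (hd : ∀ w ≠ 0, R.map reduction *ᵥ w = 0 → d ≤ hammingNorm w)
    (hc : c ∈ liftedCode R) (hc_ne : c ≠ 0) (hc_red : reduction ∘ c = 0) :
    d ≤ hammingNorm c := by
  obtain ⟨w, rfl⟩ := exists_eq_two_smul_of_reduction_comp_eq_zero hc_red
  have hsupp (j : ι) : ((2 : ZMod 4) • w) j = 0 ↔ (reduction ∘ w) j = 0 :=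
    two_mul_eq_zero_iff_reduction_eq_zero
  have hnorm : hammingNorm ((2 : ZMod 4) • w) = hammingNorm (reduction ∘ w) := by
    simp only [hammingNorm, ne_eq, hsupp]
  rw [hnorm]
  refine hd _ (fun h0 => hc_ne ?_) (two_smul_mem_liftedCode_iff.1 hc)
  exact funext fun j => (hsupp j).2 (congr_fun h0 j)

end LiftedCode

section LiftedLattice

theorem dotProduct_self_eq_one_dotProduct {ι : Type*} [Fintype ι] (v : ι → ZMod 2) :
    v ⬝ᵥ v = 1 ⬝ᵥ v :=
  Finset.sum_congr rfl fun j _ => (by decide : ∀ k : ZMod 2, k * k = 1 * k) (v j)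

theorem hammingNorm_one_add_add_hammingNorm {ι : Type*} [Fintype ι] (v : ι → ZMod 2) :
    hammingNorm (1 + v) + hammingNorm v = Fintype.card ι := by
  have hiff : ∀ k : ZMod 2, 1 + k ≠ 0 ↔ ¬k ≠ 0 := by decide
  rw [hammingNorm, hammingNorm, add_comm]
  simp only [Pi.add_apply, Pi.one_apply, hiff]
  exact Finset.card_filter_add_card_filter_not _

variable {n : ℕ} {κ : Type*} {N : Matrix κ (Fin n) ℤ} {u z w : Fin n → ℤ}

theorem exists_inner_two_smul_halfVec_eq (h : 8 ∣ z ⬝ᵥ z - 2 * (u ⬝ᵥ z)) :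
    ∃ m : ℤ, ⟪(2 : ℝ) • halfVec u, halfVec z⟫ = normOf (halfVec z) + 2 * m := by
  obtain ⟨m, hm⟩ := h
  have hm' : ((z ⬝ᵥ z : ℤ) : ℝ) - 2 * (u ⬝ᵥ z : ℤ) = 8 * m := by exact_mod_cast hm
  refine ⟨-m, ?_⟩
  rw [real_inner_smul_left, inner_halfVec, normOf_halfVec]
  push_cast
  linarith

theorem map_intCast_map_reduction {ι : Type*} (N : Matrix κ ι ℤ) :
    (N.map ((↑) : ℤ → ZMod 4)).map reduction = N.map (↑) := by
  ext i j
  exact reduction_intCast (N i j)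

theorem intCast_comp_two_smul {ι : Type*} (w : ι → ℤ) :
    (Int.cast ∘ ((2 : ℤ) • w) : ι → ZMod 4) = (2 : ZMod 4) • (Int.cast ∘ w) := by
  ext j
  simp

variable [Fintype κ]

/-- The lattice obtained by Construction A from the code over `ℤ/4ℤ` that lifts the residue code
generated by the rows of `N`. -/
abbrev liftedLattice (N : Matrix κ (Fin n) ℤ) : Set (EuclideanSpace ℝ (Fin n)) :=
  constructionA (liftedCode (N.map ((↑) : ℤ → ZMod 4)))

/-- Generators of `liftedLattice N` when the rows of `N` are isotropic and mutually orthogonal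
modulo `4`: halves of the rows, and integer vectors orthogonal to the rows modulo `2`. -/
def liftedLatticeGenerators (N : Matrix κ (Fin n) ℤ) : Set (EuclideanSpace ℝ (Fin n)) :=
  Set.range (fun i => halfVec (N.row i)) ∪
    {x | ∃ w : Fin n → ℤ, N.map ((↑) : ℤ → ZMod 2) *ᵥ (Int.cast ∘ w) = 0 ∧
      halfVec ((2 : ℤ) • w) = x}

theorem two_smul_intCast_mem_liftedCode_iff :
    Int.cast ∘ ((2 : ℤ) • w) ∈ liftedCode (N.map ((↑) : ℤ → ZMod 4)) ↔
      N.map ((↑) : ℤ → ZMod 2) *ᵥ (Int.cast ∘ w) = 0 := by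
  rw [intCast_comp_two_smul, two_smul_mem_liftedCode_iff, map_intCast_map_reduction,
    reduction_comp_intCast_comp]

theorem exists_intCast_comp_eq_one_add_vecMul {a : κ → ZMod 2}
    (hu : Int.cast ∘ u = 1 + a ᵥ* N.map ((↑) : ℤ → ZMod 2))
    (hz : Int.cast ∘ z ∈ liftedCode (N.map ((↑) : ℤ → ZMod 4))) :
    ∃ b, Int.cast ∘ (z + u) = 1 + b ᵥ* N.map ((↑) : ℤ → ZMod 2) := by
  obtain ⟨b, hb⟩ := hz.2
  rw [map_intCast_map_reduction, reduction_comp_intCast_comp] at hb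
  refine ⟨a + b, ?_⟩
  rw [add_vecMul, ← add_assoc, ← hu, ← hb, add_comm z]
  exact funext fun j => Int.cast_add (u j) (z j)

variable (hN : N.map ((↑) : ℤ → ZMod 4) * (N.map ((↑) : ℤ → ZMod 4))ᵀ = 0)

include hN

theorem isUnimodularLattice_liftedLattice : IsUnimodularLattice (liftedLattice N) :=
  (isSelfDualCode_liftedCode hN).isUnimodularLattice_constructionA

theorem liftedLatticeGenerators_subset : liftedLatticeGenerators N ⊆ liftedLattice N := by
  rintro _ (⟨i, rfl⟩ | ⟨w, hw, rfl⟩)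
  · exact halfVec_mem_constructionA (row_mem_liftedCode hN i)
  · exact halfVec_mem_constructionA (two_smul_intCast_mem_liftedCode_iff.2 hw)

theorem exists_eq_vecMul_add_two_smul_of_intCast_mem
    (hz : Int.cast ∘ z ∈ liftedCode (N.map ((↑) : ℤ → ZMod 4))) :
    ∃ (a : κ → ℤ) (w : Fin n → ℤ), z = a ᵥ* N + (2 : ℤ) • w ∧
      N.map ((↑) : ℤ → ZMod 2) *ᵥ (Int.cast ∘ w) = 0 := by
  obtain ⟨hNz, a, ha⟩ := hz
  obtain ⟨a, rfl⟩ := exists_intCast_comp_eq a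
  rw [map_intCast_map_reduction, reduction_comp_intCast_comp] at ha
  have hdvd (j : Fin n) : 2 ∣ z j - (a ᵥ* N) j := by
    refine (ZMod.intCast_eq_intCast_iff_dvd_sub _ _ 2).1 ?_
    exact ((Int.castRingHom (ZMod 2)).map_vecMul N a j).trans (congr_fun ha j).symm
  choose w hw using hdvd
  obtain rfl : z = a ᵥ* N + (2 : ℤ) • w := funext fun j => eq_add_of_sub_eq' (hw j)
  refine ⟨a, w, rfl, two_smul_intCast_mem_liftedCode_iff.1 ⟨?_, 0, ?_⟩⟩
  · have hcast : Int.cast ∘ (a ᵥ* N + (2 : ℤ) • w) =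
        (Int.cast ∘ a) ᵥ* N.map ((↑) : ℤ → ZMod 4) + Int.cast ∘ ((2 : ℤ) • w) :=
      funext fun j => (Int.cast_add _ _).trans
        (congr_arg (· + _) ((Int.castRingHom (ZMod 4)).map_vecMul N a j))
    rwa [hcast, mulVec_add, mulVec_vecMul_eq_zero hN, zero_add] at hNz
  · rw [intCast_comp_two_smul, reduction_comp_two_smul, zero_vecMul]

theorem liftedLattice_subset_closure :
    liftedLattice N ⊆ AddSubgroup.closure (liftedLatticeGenerators N) := by
  rintro _ ⟨z, hz, rfl⟩
  obtain ⟨a, w, rfl, hw⟩ := exists_eq_vecMul_add_two_smul_of_intCast_mem hN hz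
  rw [vecMul_eq_sum, map_add, map_sum]
  refine add_mem (sum_mem fun i _ => ?_) (AddSubgroup.subset_closure (.inr ⟨w, hw, rfl⟩))
  rw [map_zsmul]
  exact zsmul_mem (AddSubgroup.subset_closure (.inl ⟨i, rfl⟩)) (a i)

theorem isCharacteristic_two_smul_halfVec {a : κ → ZMod 2}
    (hu : Int.cast ∘ u = 1 + a ᵥ* N.map ((↑) : ℤ → ZMod 2))
    (hrow : ∀ i, 8 ∣ N.row i ⬝ᵥ N.row i - 2 * (u ⬝ᵥ N.row i)) :
    IsCharacteristic (liftedLattice N) ((2 : ℝ) • halfVec u) := by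
  refine isCharacteristic_of_subset_closure (isUnimodularLattice_liftedLattice hN)
    (liftedLatticeGenerators_subset hN) (liftedLattice_subset_closure hN) ?_
  rintro _ (⟨i, rfl⟩ | ⟨w, hw, rfl⟩)
  · exact exists_inner_two_smul_halfVec_eq (hrow i)
  · have heven : 2 ∣ w ⬝ᵥ w - u ⬝ᵥ w := by
      refine (ZMod.intCast_zmod_eq_zero_iff_dvd _ 2).1 ?_
      rw [Int.cast_sub, intCast_dotProduct, intCast_dotProduct, hu, add_dotProduct,
        ← dotProduct_mulVec, hw, dotProduct_zero, add_zero, dotProduct_self_eq_one_dotProduct,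
        sub_self]
    refine exists_inner_two_smul_halfVec_eq ?_
    have hexpand : ((2 : ℤ) • w) ⬝ᵥ ((2 : ℤ) • w) - 2 * (u ⬝ᵥ ((2 : ℤ) • w)) =
        4 * (w ⬝ᵥ w - u ⬝ᵥ w) := by
      simp only [smul_dotProduct, dotProduct_smul, smul_eq_mul]
      ring
    exact hexpand ▸ mul_dvd_mul_left 4 heven

theorem card_le_four_mul_normOf_add_of_mem_shadow {a : κ → ZMod 2} {d : ℕ}
    {x : EuclideanSpace ℝ (Fin n)}
    (hu : Int.cast ∘ u = 1 + a ᵥ* N.map ((↑) : ℤ → ZMod 2))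
    (hd : ∀ b : κ → ZMod 2, hammingNorm (b ᵥ* N.map ((↑) : ℤ → ZMod 2)) ≤ d)
    (hu_mem : halfVec u ∈ shadow (liftedLattice N)) (hx : x ∈ shadow (liftedLattice N)) :
    (n : ℝ) ≤ 4 * normOf x + d := by
  obtain ⟨z, hz, hzx⟩ := sub_mem_of_mem_shadow (isUnimodularLattice_liftedLattice hN) hx hu_mem
  obtain ⟨b, hb⟩ := exists_intCast_comp_eq_one_add_vecMul hu hz
  have hweight := hammingNorm_intCast_comp_le_dotProduct_self (z + u) 2
  have hcompl := hammingNorm_one_add_add_hammingNorm (b ᵥ* N.map ((↑) : ℤ → ZMod 2))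
  have hle := hd b
  rw [hb] at hweight
  rw [Fintype.card_fin] at hcompl
  have hn : (n : ℤ) ≤ (z + u) ⬝ᵥ (z + u) + d := by omega
  rw [← sub_add_cancel x (halfVec u), ← hzx, ← map_add, normOf_halfVec]
  have hn' : (n : ℝ) ≤ ((z + u) ⬝ᵥ (z + u) : ℤ) + d := by exact_mod_cast hn
  linarith

theorem halfVec_mem_shadow {a : κ → ZMod 2} (hu : Int.cast ∘ u = 1 + a ᵥ* N.map ((↑) : ℤ → ZMod 2))
    (hu_norm : ¬4 ∣ u ⬝ᵥ u) (hrow : ∀ i, 8 ∣ N.row i ⬝ᵥ N.row i - 2 * (u ⬝ᵥ N.row i)) :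
    halfVec u ∈ shadow (liftedLattice N) :=
  (mem_shadow_iff (isUnimodularLattice_liftedLattice hN)).2
    ⟨halfVec_notMem_constructionA (isSelfDualCode_liftedCode hN) hu_norm,
      isCharacteristic_two_smul_halfVec hN hu hrow⟩

theorem hasSigma_liftedLattice {a : κ → ZMod 2} {d : ℕ}
    (hu : Int.cast ∘ u = 1 + a ᵥ* N.map ((↑) : ℤ → ZMod 2))
    (hd : ∀ b : κ → ZMod 2, hammingNorm (b ᵥ* N.map ((↑) : ℤ → ZMod 2)) ≤ d)
    (hu_mem : halfVec u ∈ shadow (liftedLattice N)) (hlt : u ⬝ᵥ u + d < n + 8) :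
    HasSigma (liftedLattice N) (u ⬝ᵥ u : ℤ) := by
  refine ⟨normOf (halfVec u), hasShadowMinNorm_of_forall_sub_two_lt
    (isUnimodularLattice_liftedLattice hN) hu_mem fun x hx => ?_, ?_⟩
  · have hcard := card_le_four_mul_normOf_add_of_mem_shadow hN hu hd hu_mem hx
    have hlt' : ((u ⬝ᵥ u : ℤ) : ℝ) + d < n + 8 := by exact_mod_cast hlt
    rw [normOf_halfVec]
    linarith
  · rw [normOf_halfVec, mul_div_cancel₀ _ four_ne_zero]

end LiftedLattice

section DualDistance

theorem le_hammingNorm_of_mulVec_eq_zero {κ ι : Type*} [Fintype ι] [LinearOrder ι]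
    {M : Matrix κ ι (ZMod 2)} {w : ι → ZMod 2} {d : ℕ} (hw : w ≠ 0) (hMw : M *ᵥ w = 0)
    (hcol : ∀ k, 0 < k → k < d → ∀ f : Fin k ↪o ι, ∑ i, M.col (f i) ≠ 0) :
    d ≤ hammingNorm w := by
  by_contra! hlt
  let s : Finset ι := {j | w j ≠ 0}
  refine hcol s.card (hammingNorm_pos_iff.2 hw) hlt (s.orderEmbOfFin rfl) ?_
  have hsum := Finset.univ.sum_map (s.orderEmbOfFin rfl).toEmbedding M.col
  rw [Finset.map_orderEmbOfFin_univ] at hsum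
  calc ∑ i, M.col (s.orderEmbOfFin rfl i) = ∑ j with w j ≠ 0, M.col j := hsum.symm
    _ = M *ᵥ w := ?_
    _ = 0 := hMw
  ext i
  rw [Finset.sum_apply, Finset.sum_filter]
  refine Finset.sum_congr rfl fun j _ => ?_
  rw [col_apply]
  exact (by decide : ∀ a b : ZMod 2, (if b ≠ 0 then a else 0) = a * b) _ _

end DualDistance

section BitVec

variable {n : ℕ}

/-- The `0`-`1`-vector whose `j`-th entry is the bit of weight `2 ^ j` of `x`. Binary words are
encoded by natural numbers so that their sums become `^^^`, which evaluates fast. -/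
def bitVec (R : Type*) [Zero R] [One R] (n x : ℕ) : Fin n → R :=
  fun j => if x.testBit j then 1 else 0

theorem intCast_comp_bitVec (R : Type*) [Ring R] (n x : ℕ) :
    Int.cast ∘ bitVec ℤ n x = bitVec R n x := by
  ext j
  simp only [Function.comp_apply, bitVec]
  split <;> simp

theorem hammingNorm_bitVec (n x : ℕ) :
    hammingNorm (bitVec (ZMod 2) n x) = Finset.card {j : Fin n | x.testBit j} := by
  simp [hammingNorm, bitVec]

theorem bitVec_zero (n : ℕ) : bitVec (ZMod 2) n 0 = 0 := by
  ext
  simp [bitVec]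

theorem bitVec_xor (n x y : ℕ) :
    bitVec (ZMod 2) n (x ^^^ y) = bitVec (ZMod 2) n x + bitVec (ZMod 2) n y := by
  ext j
  simp only [bitVec, Nat.testBit_xor, Pi.add_apply]
  cases x.testBit j <;> cases y.testBit j <;> rfl

theorem bitVec_ne_zero {x : ℕ} (hx : x < 2 ^ n) (hx_ne : x ≠ 0) : bitVec (ZMod 2) n x ≠ 0 := by
  contrapose! hx_ne
  refine Nat.eq_of_testBit_eq fun j => ?_
  rw [Nat.zero_testBit]
  rcases lt_or_ge j n with hj | hj
  · simpa [bitVec] using congr_fun hx_ne ⟨j, hj⟩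
  · exact Nat.testBit_eq_false_of_lt (hx.trans_le (Nat.pow_le_pow_right two_pos hj))

/-- The binary code spanned by the words `g i`, as a list of bit patterns that can be searched
exhaustively. -/
def bitSpan : {k : ℕ} → (Fin k → ℕ) → List ℕ
  | 0, _ => [0]
  | _ + 1, g => (bitSpan (Fin.tail g)).flatMap fun x => [x, g 0 ^^^ x]

theorem exists_mem_bitSpan_vecMul_eq (n : ℕ) {k : ℕ} (a : Fin k → ZMod 2) (g : Fin k → ℕ) :
    ∃ x ∈ bitSpan g, a ᵥ* Matrix.of (fun i => bitVec (ZMod 2) n (g i)) = bitVec (ZMod 2) n x := by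
  induction k with
  | zero => exact ⟨0, List.mem_singleton_self 0, by rw [bitVec_zero]; ext; simp [vecMul]⟩
  | succ k ih =>
    obtain ⟨x, hx, hax⟩ := ih (Fin.tail a) (Fin.tail g)
    have hsplit : a ᵥ* Matrix.of (fun i => bitVec (ZMod 2) n (g i)) =
        a 0 • bitVec (ZMod 2) n (g 0) + bitVec (ZMod 2) n x := by
      rw [← hax, vecMul_eq_sum, vecMul_eq_sum, Fin.sum_univ_succ]
      rfl
    rw [hsplit]
    obtain ha | ha : a 0 = 0 ∨ a 0 = 1 := (by decide : ∀ b : ZMod 2, b = 0 ∨ b = 1) (a 0)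
    · exact ⟨x, List.mem_flatMap.2 ⟨x, hx, by simp⟩, by rw [ha, zero_smul, zero_add]⟩
    · exact ⟨g 0 ^^^ x, List.mem_flatMap.2 ⟨x, hx, by simp⟩,
        by rw [ha, one_smul, bitVec_xor]⟩

end BitVec

section Dimension43

/-- The rows, read as bit patterns, of a systematic generator matrix of a doubly-even binary
`[43, 10, 16]` code with dual distance `4`. -/
def residueMask : Fin 10 → ℕ :=
  ![7609673093121,
    251533130754,
    4434682170372,
    3705367611400,
    828608924688,
    7801351378976,
    296771500096,
    1625075015808,
    3107151745280,
    911662248448]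

/-- The bit patterns of the entries `2` that have to be added to the rows of `residueMask` to make
them isotropic and mutually orthogonal modulo `4`. -/
def liftMask : Fin 10 → ℕ :=
  ![0, 0, 0, 3, 2, 18, 38, 124, 147, 55]

/-- Representatives in `{0, 1, 2, 3}` of the generators of order `4` of the code over `ℤ/4ℤ`. -/
def generatorMatrix : Matrix (Fin 10) (Fin 43) ℤ :=
  Matrix.of fun i => bitVec ℤ 43 (residueMask i) + 2 • bitVec ℤ 43 (liftMask i)

/-- A vector with `19` entries `±1` and all others `0`, whose half lies in the shadow. -/
def shadowVec : Fin 43 → ℤ :=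
  bitVec ℤ 43 6880580756018 - bitVec ℤ 43 526784

/-- The `j`-th column of the matrix with rows `residueMask`, as a bit pattern. -/
def columnMask (j : Fin 43) : ℕ :=
  Nat.ofBits fun i : Fin 10 => (residueMask i).testBit j

theorem generatorMatrix_mul_transpose :
    generatorMatrix.map ((↑) : ℤ → ZMod 4) * (generatorMatrix.map ((↑) : ℤ → ZMod 4))ᵀ = 0 := by
  decide +kernel

theorem eight_dvd_row_dotProduct_sub (i : Fin 10) :
    8 ∣ generatorMatrix.row i ⬝ᵥ generatorMatrix.row i -
      2 * (shadowVec ⬝ᵥ generatorMatrix.row i) := by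
  revert i
  decide +kernel

theorem shadowVec_dotProduct_self : shadowVec ⬝ᵥ shadowVec = 19 := by
  decide +kernel

theorem generatorMatrix_map_intCast :
    generatorMatrix.map ((↑) : ℤ → ZMod 2) =
      Matrix.of fun i => bitVec (ZMod 2) 43 (residueMask i) := by
  ext i j
  rw [of_apply, ← intCast_comp_bitVec]
  simp [generatorMatrix, show (2 : ZMod 2) = 0 from rfl]

theorem intCast_comp_shadowVec :
    Int.cast ∘ shadowVec =
      1 + bitVec (ZMod 2) 10 13 ᵥ* generatorMatrix.map ((↑) : ℤ → ZMod 2) := by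
  decide +kernel

theorem weight_of_mem_bitSpan : ∀ x ∈ bitSpan residueMask,
    x = 0 ∨ Finset.card {j : Fin 43 | x.testBit j} ∈ Finset.Icc 16 28 := by
  decide +kernel

theorem columnMask_xor_ne_zero (j : Fin 43) : columnMask j ≠ 0 ∧
    ∀ k, j < k → columnMask j ^^^ columnMask k ≠ 0 ∧
      ∀ l, k < l → columnMask j ^^^ columnMask k ^^^ columnMask l ≠ 0 := by
  revert j
  decide +kernel

theorem vecMul_eq_zero_or_hammingNorm_mem_Icc (b : Fin 10 → ZMod 2) :
    b ᵥ* generatorMatrix.map ((↑) : ℤ → ZMod 2) = 0 ∨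
      hammingNorm (b ᵥ* generatorMatrix.map ((↑) : ℤ → ZMod 2)) ∈ Finset.Icc 16 28 := by
  obtain ⟨x, hx, hbx⟩ := exists_mem_bitSpan_vecMul_eq 43 b residueMask
  rw [generatorMatrix_map_intCast, hbx, hammingNorm_bitVec]
  exact (weight_of_mem_bitSpan x hx).imp_left fun h0 => by rw [h0, bitVec_zero]

theorem hammingNorm_vecMul_le (b : Fin 10 → ZMod 2) :
    hammingNorm (b ᵥ* generatorMatrix.map ((↑) : ℤ → ZMod 2)) ≤ 28 := by
  rcases vecMul_eq_zero_or_hammingNorm_mem_Icc b with hb | hb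
  · simp [hb]
  · exact (Finset.mem_Icc.1 hb).2

theorem sixteen_le_hammingNorm_reduction {c : Fin 43 → ZMod 4}
    (hc : c ∈ liftedCode (generatorMatrix.map (↑))) (hc_ne : reduction ∘ c ≠ 0) :
    16 ≤ hammingNorm (reduction ∘ c) := by
  obtain ⟨b, hb⟩ := hc.2
  rw [map_intCast_map_reduction] at hb
  rw [hb] at hc_ne ⊢
  exact (Finset.mem_Icc.1 ((vecMul_eq_zero_or_hammingNorm_mem_Icc b).resolve_left hc_ne)).1

theorem col_generatorMatrix_map_intCast (j : Fin 43) :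
    (generatorMatrix.map ((↑) : ℤ → ZMod 2)).col j = bitVec (ZMod 2) 10 (columnMask j) := by
  ext i
  rw [generatorMatrix_map_intCast]
  simp [bitVec, columnMask, Nat.testBit_ofBits_lt]

theorem four_le_hammingNorm_of_mulVec_eq_zero {w : Fin 43 → ZMod 2} (hw : w ≠ 0)
    (hGw : generatorMatrix.map ((↑) : ℤ → ZMod 2) *ᵥ w = 0) : 4 ≤ hammingNorm w := by
  refine le_hammingNorm_of_mulVec_eq_zero hw hGw fun k hk hk4 f => ?_
  have hlt (j : Fin 43) : columnMask j < 2 ^ 10 := Nat.ofBits_lt_two_pow _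
  simp only [col_generatorMatrix_map_intCast]
  interval_cases k
  · rw [Fin.sum_univ_one]
    exact bitVec_ne_zero (hlt _) (columnMask_xor_ne_zero _).1
  · rw [Fin.sum_univ_two, ← bitVec_xor]
    exact bitVec_ne_zero (Nat.xor_lt_two_pow (hlt _) (hlt _))
      ((columnMask_xor_ne_zero _).2 _ (f.strictMono (by decide))).1
  · rw [Fin.sum_univ_three, ← bitVec_xor, ← bitVec_xor]
    exact bitVec_ne_zero (Nat.xor_lt_two_pow (Nat.xor_lt_two_pow (hlt _) (hlt _)) (hlt _))
      (((columnMask_xor_ne_zero _).2 _ (f.strictMono (by decide))).2 _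
        (f.strictMono (by decide)))

theorem four_le_hammingNorm_of_reduction_eq_zero {c : Fin 43 → ZMod 4}
    (hc : c ∈ liftedCode (generatorMatrix.map (↑))) (hc_ne : c ≠ 0) (hc_red : reduction ∘ c = 0) :
    4 ≤ hammingNorm c := by
  refine le_hammingNorm_of_mem_liftedCode (fun w hw hGw => ?_) hc hc_ne hc_red
  rw [map_intCast_map_reduction] at hGw
  exact four_le_hammingNorm_of_mulVec_eq_zero hw hGw

end Dimension43

theorem exists_unimodular_dim43_min4_sigma19 :
    ∃ L : Set (EuclideanSpace ℝ (Fin 43)),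
      IsUnimodularLattice L ∧ IsOddLattice L ∧ HasMinNorm L 4 ∧ HasSigma L 19 := by
  have hL := isUnimodularLattice_liftedLattice generatorMatrix_mul_transpose
  have hnorm : ¬4 ∣ shadowVec ⬝ᵥ shadowVec := by
    rw [shadowVec_dotProduct_self]
    decide
  have hshadow : halfVec shadowVec ∈ shadow (liftedLattice generatorMatrix) :=
    halfVec_mem_shadow generatorMatrix_mul_transpose intCast_comp_shadowVec hnorm
      eight_dvd_row_dotProduct_sub
  have hsigma : HasSigma (liftedLattice generatorMatrix) (shadowVec ⬝ᵥ shadowVec : ℤ) :=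
    hasSigma_liftedLattice generatorMatrix_mul_transpose intCast_comp_shadowVec
      hammingNorm_vecMul_le hshadow (by rw [shadowVec_dotProduct_self]; norm_num)
  refine ⟨liftedLattice generatorMatrix, hL, isOddLattice_of_mem_shadow hL hshadow, ?_, ?_⟩
  · exact hasMinNorm_constructionA
      (isSelfDualCode_liftedCode generatorMatrix_mul_transpose).zero_mem
      (fun _ => sixteen_le_hammingNorm_reduction)
      fun _ => four_le_hammingNorm_of_reduction_eq_zero
  · rw [shadowVec_dotProduct_self] at hsigma
    exact_mod_cast hsigma
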